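/- arXiv:1709.08150 — 2 statements merged into one kernel-verified Lean document; each statement's English description precedes it below -/
import Mathlib

section
/- In the consecutive prime power construction, for every nonzero β ∈ K one has N_β^⊤ = N_{−β}, and moreover N_β · N_{−β} = q²·I_{(q+1)q²} − q·(I_{q+1} ⊗ I_q ⊗ J_q) + I_{q+1} ⊗ J_{q²} + (q−1)·J_{(q+1)q²}. -/
open Matrix Kronecker BigOperators

noncomputable section

/-- The all-ones matrix. -/
def allOnes (n : Type*) : Matrix n n ℝ := Matrix.of fun _ _ => 1

/-- The auxiliary matrix `C_α` for `α ∈ F`: the `((a,u),(b,v))`-entry is `1` iff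
`v − u = α·(b − a)`. -/
def auxC {F : Type*} [Field F] [Fintype F] [DecidableEq F] (α : F) :
    Matrix (F × F) (F × F) ℝ :=
  Matrix.of fun p r => if r.2 - p.2 = α * (r.1 - p.1) then 1 else 0

/-- The permutation matrix `P_{β,γ}` with `(a,b)`-entry `1` iff `β·(−a+b) = γ`. -/
def permP {K : Type*} [Field K] [DecidableEq K] (β γ : K) : Matrix K K ℝ :=
  Matrix.of fun a b => if β * (-a + b) = γ then 1 else 0

/-- The matrix `N_β = Σ_{γ∈K∖{0}} P_{β,γ} ⊗ C_{ψ(γ)}` of the consecutive prime power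
construction, where `ψ : K∖{0} → F` is a fixed bijection. -/
def NN {F K : Type*} [Field F] [Fintype F] [DecidableEq F]
    [Field K] [Fintype K] [DecidableEq K]
    (ψ : {x : K // x ≠ 0} ≃ F) (β : K) :
    Matrix (K × (F × F)) (K × (F × F)) ℝ :=
  ∑ γ : {x : K // x ≠ 0}, permP β (γ : K) ⊗ₖ auxC (ψ γ)

/-!
Row `(a, u)` of `C_α` is the indicator of the line of slope `α` through `(a, u)`. Parallel lines
coincide or are disjoint and lines of different slopes meet exactly once, so
`C_α C_δ = J + [α = δ] (q C_α - J)`. Also `P_{β,γ} P_{-β,δ} = P_{β,γ-δ}`. Expanding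
`N_β N_{-β} = ∑_{γ,δ} P_{β,γ} P_{-β,δ} ⊗ C_{ψ(γ)} C_{ψ(δ)}`, the terms `J` contribute
`(∑_{γ≠0} P_{β,γ}) (∑_{δ≠0} P_{-β,δ}) ⊗ J = (J - 1)² ⊗ J`, while the corrections live on the
diagonal `γ = δ`, where the permutation part is `1`, and contribute `1 ⊗ (q ∑_α C_α - q J)`.
Finally `∑_α C_α = q - 1 ⊗ J + J`: points with different first coordinates lie on exactly one line
with a slope in `F`, distinct points with the same first coordinate on none.
-/

section Kronecker

variable {ι R l m n p : Type*}

theorem sum_kronecker [NonUnitalNonAssocSemiring R] (s : Finset ι) (A : ι → Matrix l m R)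
    (B : Matrix n p R) : (∑ i ∈ s, A i) ⊗ₖ B = ∑ i ∈ s, A i ⊗ₖ B := by
  ext ⟨a, b⟩ ⟨c, d⟩
  simp only [kronecker_apply, Matrix.sum_apply, Finset.sum_mul]

theorem kronecker_sum [NonUnitalNonAssocSemiring R] (s : Finset ι) (A : Matrix l m R)
    (B : ι → Matrix n p R) : A ⊗ₖ (∑ i ∈ s, B i) = ∑ i ∈ s, A ⊗ₖ B i := by
  ext ⟨a, b⟩ ⟨c, d⟩
  simp only [kronecker_apply, Matrix.sum_apply, Finset.mul_sum]

end Kronecker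

section AllOnes

theorem allOnes_mul_allOnes (n : Type*) [Fintype n] :
    allOnes n * allOnes n = (Fintype.card n : ℝ) • allOnes n := by
  ext i j
  simp [allOnes, Matrix.mul_apply]

theorem allOnes_kronecker_allOnes (m n : Type*) :
    allOnes m ⊗ₖ allOnes n = allOnes (m × n) := by
  ext i j
  simp [allOnes]

end AllOnes

section AuxC

variable {F : Type*} [Field F] [Fintype F] [DecidableEq F]

theorem auxC_transpose (α : F) : (auxC α)ᵀ = auxC α := by
  ext p r
  have sign_symm : p.2 - r.2 = α * (p.1 - r.1) ↔ r.2 - p.2 = α * (r.1 - p.1) := by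
    rw [← neg_sub r.2, ← neg_sub r.1, mul_neg, neg_inj]
  simp only [auxC, transpose_apply, of_apply, sign_symm]

theorem auxC_mul_auxC_apply (α δ : F) (p r : F × F) :
    (auxC α * auxC δ) p r =
      ∑ x : F, if r.2 - p.2 = α * (x - p.1) + δ * (r.1 - x) then (1 : ℝ) else 0 := by
  rw [Matrix.mul_apply, Fintype.sum_prod_type]
  refine Finset.sum_congr rfl fun x _ => ?_
  have on_line (y : F) : y - p.2 = α * (x - p.1) ↔ y = α * (x - p.1) + p.2 := sub_eq_iff_eq_add
  simp only [auxC, of_apply, on_line, ite_mul, one_mul, zero_mul, Finset.sum_ite_eq',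
    Finset.mem_univ, if_true]
  congr 1
  rw [add_comm (α * _) p.2, ← sub_sub, sub_eq_iff_eq_add']

theorem auxC_mul_self (α : F) : auxC α * auxC α = (Fintype.card F : ℝ) • auxC α := by
  ext p r
  have collapse (x : F) : α * (x - p.1) + α * (r.1 - x) = α * (r.1 - p.1) := by ring
  simp only [auxC_mul_auxC_apply, collapse, Finset.sum_const, Finset.card_univ]
  simp [auxC]

theorem auxC_mul_auxC_of_ne {α δ : F} (h : α ≠ δ) : auxC α * auxC δ = allOnes (F × F) := by
  ext p r
  have meet_iff (x : F) : r.2 - p.2 = α * (x - p.1) + δ * (r.1 - x) ↔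
      x = (r.2 - p.2 + α * p.1 - δ * r.1) / (α - δ) := by
    rw [eq_div_iff (sub_ne_zero.2 h)]
    constructor <;> intro e <;> linear_combination -e
  simp [auxC_mul_auxC_apply, meet_iff, allOnes]

theorem auxC_mul_auxC (α δ : F) :
    auxC α * auxC δ =
      allOnes (F × F) + if α = δ then (Fintype.card F : ℝ) • auxC α - allOnes (F × F) else 0 := by
  split_ifs with h
  · rw [← h, auxC_mul_self, add_sub_cancel]
  · rw [auxC_mul_auxC_of_ne h, add_zero]

theorem sum_auxC :
    ∑ α : F, auxC α =
      (Fintype.card F : ℝ) • (1 : Matrix (F × F) (F × F) ℝ) -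
        (1 : Matrix F F ℝ) ⊗ₖ allOnes F + allOnes (F × F) := by
  ext ⟨a, u⟩ ⟨b, v⟩
  simp only [Matrix.sum_apply, Matrix.add_apply, Matrix.sub_apply, Matrix.smul_apply,
    kronecker_apply, one_apply, Prod.mk.injEq, auxC, allOnes, of_apply]
  by_cases hab : a = b
  · by_cases huv : u = v
    · simp [hab, huv]
    · simp [hab, huv, sub_eq_zero, Ne.symm huv]
  · have slope_iff (α : F) : v - u = α * (b - a) ↔ (v - u) / (b - a) = α :=
      (div_eq_iff (sub_ne_zero.2 (Ne.symm hab))).symm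
    simp [hab, slope_iff]

end AuxC

section PermP

variable {K : Type*} [Field K] [DecidableEq K]

theorem permP_transpose (β γ : K) : (permP β γ)ᵀ = permP (-β) γ := by
  ext a b
  have swap : β * (-b + a) = -β * (-a + b) := by ring
  simp only [permP, transpose_apply, of_apply, swap]

theorem permP_neg_left (β γ : K) : permP (-β) γ = permP β (-γ) := by
  ext a b
  simp only [permP, of_apply, neg_mul, neg_eq_iff_eq_neg]

theorem permP_zero_right {β : K} (hβ : β ≠ 0) : permP β 0 = 1 := by
  ext a b
  simp only [permP, of_apply, one_apply, mul_eq_zero, hβ, false_or, neg_add_eq_zero]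

variable [Fintype K]

theorem permP_mul_permP {β : K} (hβ : β ≠ 0) (γ δ : K) :
    permP β γ * permP β δ = permP β (γ + δ) := by
  ext a b
  have step_iff (c : K) : β * (-a + c) = γ ↔ c = a + γ / β := by
    rw [mul_comm, ← eq_div_iff hβ, neg_add_eq_iff_eq_add]
  have shift_iff : β * (-(a + γ / β) + b) = δ ↔ β * (-a + b) = γ + δ := by
    rw [← sub_eq_iff_eq_add', show β * (-(a + γ / β) + b) = β * (-a + b) - γ by field_simp; ring]
  simp only [Matrix.mul_apply, permP, of_apply, step_iff, ite_mul, one_mul, zero_mul,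
    Finset.sum_ite_eq', Finset.mem_univ, if_true, shift_iff]

theorem permP_mul_permP_neg {β : K} (hβ : β ≠ 0) (γ : K) : permP β γ * permP (-β) γ = 1 := by
  rw [permP_neg_left, permP_mul_permP hβ, add_neg_cancel, permP_zero_right hβ]

theorem sum_permP (β : K) : ∑ γ : K, permP β γ = allOnes K := by
  ext a b
  simp [Matrix.sum_apply, permP, allOnes]

theorem sum_nonzero_permP {β : K} (hβ : β ≠ 0) :
    ∑ γ : {x : K // x ≠ 0}, permP β (γ : K) = allOnes K - 1 := by
  rw [eq_sub_iff_add_eq', ← permP_zero_right hβ, ← sum_permP β,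
    Fintype.sum_eq_add_sum_subtype_ne (permP β) 0]

end PermP

section NN

variable {F K : Type*} [Field F] [Fintype F] [DecidableEq F] [Field K] [Fintype K] [DecidableEq K]

theorem NN_transpose (ψ : {x : K // x ≠ 0} ≃ F) (β : K) : (NN ψ β)ᵀ = NN ψ (-β) := by
  simp only [NN, transpose_sum, ← kroneckerMap_transpose, permP_transpose, auxC_transpose]

theorem NN_mul_NN_neg (ψ : {x : K // x ≠ 0} ≃ F) {β : K} (hβ : β ≠ 0) :
    NN ψ β * NN ψ (-β) =
      ((allOnes K - 1) * (allOnes K - 1)) ⊗ₖ allOnes (F × F) +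
        (1 : Matrix K K ℝ) ⊗ₖ
          ∑ α : F, ((Fintype.card F : ℝ) • auxC α - allOnes (F × F)) := by
  set J := allOnes (F × F)
  set D : F → Matrix (F × F) (F × F) ℝ := fun α => (Fintype.card F : ℝ) • auxC α - J
  have term_mul (γ δ : {x : K // x ≠ 0}) :
      permP β (γ : K) ⊗ₖ auxC (ψ γ) * permP (-β) (δ : K) ⊗ₖ auxC (ψ δ) =
        (permP β (γ : K) * permP (-β) (δ : K)) ⊗ₖ J +
          if γ = δ then (1 : Matrix K K ℝ) ⊗ₖ D (ψ γ) else 0 := by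
    rw [← mul_kronecker_mul, auxC_mul_auxC, kronecker_add]
    simp only [ψ.injective.eq_iff]
    split_ifs with h
    · rw [← h, permP_mul_permP_neg hβ]
    · rw [kronecker_zero]
  calc NN ψ β * NN ψ (-β)
    _ = ∑ γ : {x : K // x ≠ 0}, ∑ δ : {x : K // x ≠ 0},
          (permP β (γ : K) * permP (-β) (δ : K)) ⊗ₖ J +
        ∑ γ : {x : K // x ≠ 0}, (1 : Matrix K K ℝ) ⊗ₖ D (ψ γ) := by
      simp only [NN, Finset.sum_mul_sum, term_mul, Finset.sum_add_distrib, Finset.sum_ite_eq,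
        Finset.mem_univ, if_true]
    _ = ((∑ γ : {x : K // x ≠ 0}, permP β (γ : K)) *
          ∑ δ : {x : K // x ≠ 0}, permP (-β) (δ : K)) ⊗ₖ J +
        (1 : Matrix K K ℝ) ⊗ₖ ∑ γ : {x : K // x ≠ 0}, D (ψ γ) := by
      simp only [Finset.sum_mul_sum, sum_kronecker, kronecker_sum]
    _ = ((allOnes K - 1) * (allOnes K - 1)) ⊗ₖ J + (1 : Matrix K K ℝ) ⊗ₖ ∑ α : F, D α := by
      rw [sum_nonzero_permP hβ, sum_nonzero_permP (neg_ne_zero.2 hβ), Equiv.sum_comp ψ D]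

end NN

/-- In the consecutive prime power construction, `N_βᵀ = N_{−β}` and
`N_β · N_{−β} = q²·I − q·(I_{q+1} ⊗ I_q ⊗ J_q) + I_{q+1} ⊗ J_{q²} + (q−1)·J`. -/
theorem NN_transpose_mul_neg {F K : Type*} [Field F] [Fintype F] [DecidableEq F]
    [Field K] [Fintype K] [DecidableEq K]
    (hcard : Fintype.card K = Fintype.card F + 1)
    (ψ : {x : K // x ≠ 0} ≃ F) (β : K) (hβ : β ≠ 0) :
    (NN ψ β)ᵀ = NN ψ (-β) ∧
    NN ψ β * NN ψ (-β) =
      (Fintype.card F : ℝ) ^ 2 • (1 : Matrix (K × (F × F)) (K × (F × F)) ℝ) -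
        (Fintype.card F : ℝ) •
          ((1 : Matrix K K ℝ) ⊗ₖ ((1 : Matrix F F ℝ) ⊗ₖ allOnes F)) +
        (1 : Matrix K K ℝ) ⊗ₖ allOnes (F × F) +
        ((Fintype.card F : ℝ) - 1) • allOnes (K × (F × F)) := by
  set q : ℝ := (Fintype.card F : ℝ)
  have perm_part : (allOnes K - 1) * (allOnes K - 1) = (q - 1) • allOnes K + 1 := by
    have hK : (Fintype.card K : ℝ) = q + 1 := by simp [q, hcard]
    rw [sub_mul, mul_sub, allOnes_mul_allOnes, hK, one_mul, mul_one]
    module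
  have aux_part : ∑ α : F, (q • auxC α - allOnes (F × F)) =
      q ^ 2 • (1 : Matrix (F × F) (F × F) ℝ) + (-q) • ((1 : Matrix F F ℝ) ⊗ₖ allOnes F) := by
    rw [Finset.sum_sub_distrib, ← Finset.smul_sum, sum_auxC, Finset.sum_const, Finset.card_univ,
      ← Nat.cast_smul_eq_nsmul ℝ]
    module
  refine ⟨NN_transpose ψ β, ?_⟩
  rw [NN_mul_NN_neg ψ hβ, perm_part, aux_part, add_kronecker, smul_kronecker,
    allOnes_kronecker_allOnes, kronecker_add, kronecker_smul, kronecker_smul, one_kronecker_one]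
  module
end
end

section
/- In the consecutive prime power construction, for all nonzero β, β' ∈ K with β + β' ≠ 0, one has N_β · N_{β'} = q·N_{ββ'/(β+β')} + 2·(I_{q+1} ⊗ J_{q²}) + (q−2)·J_{(q+1)q²}. -/
open Matrix Kronecker BigOperators

noncomputable section

/-!
The blocks of `N_β N_{β'}` are the sums over `c` of `C k * C l`, where `k = β (c - a)`,
`l = β' (b - c)` and `C 0 = 0`. Two lines of an affine plane from different parallel classes meet
in one point, so `C k * C l = J` for distinct nonzero `k`, `l`, while `C k * C k = q C k`. Writing
every such product as `J` plus corrections supported on `k = l`, `k = 0`, `l = 0` and `k = l = 0`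
turns the sum into a count: `k = l` holds for exactly one `c`, with common value
`ββ' / (β + β') (b - a)`, and `k = 0` and `l = 0` hold for one `c` each, while `k = l = 0` occurs
only in the diagonal blocks.
-/

section AuxiliaryFamily

variable {K 𝕜 R S : Type*}

/-- The multiplication rules of the incidence matrices of the parallel classes of an affine plane
of order `q`, for a family indexed by `K` whose member at `0` is the zero matrix. It isolates what
the block computation needs to know about the matrices `C_{ψ(γ)}`. -/
structure IsAuxiliaryFamily [Zero K] [Zero R] [Mul R] [SMul 𝕜 R] (f : K → R) (q : 𝕜) (J : R) :
    Prop where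
  map_zero : f 0 = 0
  mul_self (k : K) : f k * f k = q • f k
  mul_of_ne {k l : K} (hk : k ≠ 0) (hl : l ≠ 0) (hkl : k ≠ l) : f k * f l = J

/-- The matrix with `(a, b)`-entry `f (s • (b - a))`: a transposed circulant matrix over the
additive group `K`, dilated by the scalar `s`. For block-valued `f` it describes `N_s`. -/
def dilatedCirculant [AddGroup K] [SMul S K] (f : K → R) (s : S) : Matrix K K R :=
  Matrix.of fun a b => f (s • (-a + b))

theorem IsAuxiliaryFamily.mul_eq [Zero K] [DecidableEq K] [Semiring 𝕜] [NonUnitalNonAssocRing R]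
    [Module 𝕜 R] {f : K → R} {q : 𝕜} {J : R} (hf : IsAuxiliaryFamily f q J) (k l : K) :
    f k * f l = J + (if k = l then q • f k - J else 0) - (if k = 0 then J else 0) -
      (if l = 0 then J else 0) + (if k = 0 ∧ l = 0 then (2 : 𝕜) • J else 0) := by
  rcases eq_or_ne k 0 with rfl | hk <;> rcases eq_or_ne l 0 with rfl | hl
  · simp [hf.map_zero, two_smul]
  · simp [hf.map_zero, hl, hl.symm]
  · simp [hf.map_zero, hk]
  · rcases eq_or_ne k l with rfl | hkl
    · simp [hk, hf.mul_self]
    · simp [hk, hl, hkl, hf.mul_of_ne hk hl hkl]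

theorem units_smul_neg_add_eq_smul_neg_add_iff [AddCommGroup K] [Semiring S] [Module S K]
    {β β' σ : Sˣ} (hσ : (σ : S) = β + β') (a b c : K) :
    β • (-a + c) = β' • (-c + b) ↔ c = a + σ⁻¹ • β' • (-a + b) := by
  have hσ_smul : σ • (-a + c) = β • (-a + c) + β' • (-a + c) := by
    simp only [Units.smul_def, hσ, add_smul]
  have hβ' : β' • (-c + b) = β' • (-a + b) - β' • (-a + c) := by
    rw [← smul_sub]
    congr 1
    abel
  rw [hβ', eq_sub_iff_add_eq, ← hσ_smul, ← eq_inv_smul_iff, neg_add_eq_iff_eq_add]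

theorem IsAuxiliaryFamily.dilatedCirculant_mul [AddCommGroup K] [Fintype K] [DecidableEq K]
    [Ring 𝕜] [NonUnitalNonAssocRing R] [Module 𝕜 R] [Semiring S] [Module S K]
    {f : K → R} {q : 𝕜} {J : R} (hf : IsAuxiliaryFamily f q J)
    {β β' σ : Sˣ} (hσ : (σ : S) = β + β') :
    dilatedCirculant f (β : S) * dilatedCirculant f (β' : S) =
      q • dilatedCirculant f ((β * σ⁻¹ * β' : Sˣ) : S) +
        (2 : 𝕜) • diagonal (fun _ => J) +
        ((Fintype.card K : 𝕜) - 3) • Matrix.of fun _ _ => J := by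
  ext a b
  have h_left (c : K) : β • (-a + c) = 0 ↔ c = a := by
    rw [smul_eq_zero_iff_eq, neg_add_eq_zero, eq_comm]
  have h_right (c : K) : β' • (-c + b) = 0 ↔ c = b := by
    rw [smul_eq_zero_iff_eq, neg_add_eq_zero]
  have h_block (c : K) : f (β • (-a + c)) * f (β' • (-c + b)) =
      J + (if c = a + σ⁻¹ • β' • (-a + b) then q • f (β • (-a + c)) - J else 0) -
        (if c = a then J else 0) - (if c = b then J else 0) +
        (if c = a then if c = b then (2 : 𝕜) • J else 0 else 0) := by
    simp only [hf.mul_eq, units_smul_neg_add_eq_smul_neg_add_iff hσ, h_left, h_right, ite_and]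
  calc ∑ c, f (β • (-a + c)) * f (β' • (-c + b))
      = Fintype.card K • J + (q • f ((β * σ⁻¹ * β') • (-a + b)) - J) - J - J +
          (if a = b then (2 : 𝕜) • J else 0) := by
        simp only [h_block, Finset.sum_add_distrib, Finset.sum_sub_distrib, Finset.sum_const,
          Finset.card_univ, Finset.sum_ite_eq', Finset.mem_univ, if_true, neg_add_cancel_left,
          mul_smul]
    _ = q • f ((β * σ⁻¹ * β') • (-a + b)) + (2 : 𝕜) • (if a = b then J else 0) +
          ((Fintype.card K : 𝕜) - 3) • J := by
        simp only [sub_smul, Nat.cast_smul_eq_nsmul, ofNat_smul_eq_nsmul, smul_ite, smul_zero]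
        abel

end AuxiliaryFamily

section AffinePlane

variable {F : Type*} [Field F] [Fintype F] [DecidableEq F]

theorem auxC_apply (α : F) (x y : F × F) :
    auxC α x y = if y.2 - x.2 = α * (y.1 - x.1) then 1 else 0 :=
  rfl

theorem auxC_mul_apply (α α' : F) (x y : F × F) :
    (auxC α * auxC α') x y =
      ∑ c : F, if y.2 - x.2 = α * (c - x.1) + α' * (y.1 - c) then 1 else 0 := by
  rw [Matrix.mul_apply, Fintype.sum_prod_type]
  refine Finset.sum_congr rfl fun c _ => ?_
  have h_first (w : F) : w - x.2 = α * (c - x.1) ↔ w = x.2 + α * (c - x.1) :=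
    sub_eq_iff_eq_add'
  have h_second : y.2 - (x.2 + α * (c - x.1)) = α' * (y.1 - c) ↔
      y.2 - x.2 = α * (c - x.1) + α' * (y.1 - c) := by
    rw [← sub_sub, sub_eq_iff_eq_add']
  simp only [auxC_apply, h_first, ite_mul, one_mul, zero_mul, Finset.sum_ite_eq',
    Finset.mem_univ, if_true, h_second]

theorem auxC_mul_of_ne {α α' : F} (h : α ≠ α') : auxC α * auxC α' = allOnes (F × F) := by
  ext x y
  have h_meet (c : F) : y.2 - x.2 = α * (c - x.1) + α' * (y.1 - c) ↔
      c = (y.2 - x.2 + α * x.1 - α' * y.1) / (α - α') := by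
    rw [eq_div_iff (sub_ne_zero.2 h)]
    constructor <;> intro hc <;> linear_combination -hc
  simp [auxC_mul_apply, allOnes, h_meet]

end AffinePlane

section ConsecutivePrimePowers

variable {F K S : Type*} [Field F] [Fintype F] [DecidableEq F]

/-- The family `γ ↦ C_{ψ(γ)}`, extended by the zero matrix at `γ = 0`. -/
def extendedAuxC [Zero K] (ψ : {x : K // x ≠ 0} → F) : K → Matrix (F × F) (F × F) ℝ :=
  Function.extend Subtype.val (fun γ => auxC (ψ γ)) 0

theorem extendedAuxC_zero [Zero K] (ψ : {x : K // x ≠ 0} → F) : extendedAuxC ψ 0 = 0 :=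
  Function.extend_apply' _ _ _ fun ⟨γ, hγ⟩ => γ.2 hγ

theorem extendedAuxC_coe [Zero K] (ψ : {x : K // x ≠ 0} → F) (γ : {x : K // x ≠ 0}) :
    extendedAuxC ψ γ = auxC (ψ γ) :=
  Subtype.val_injective.extend_apply _ _ _

theorem isAuxiliaryFamily_extendedAuxC [Zero K] {ψ : {x : K // x ≠ 0} → F}
    (hψ : Function.Injective ψ) :
    IsAuxiliaryFamily (extendedAuxC ψ) (Fintype.card F : ℝ) (allOnes (F × F)) where
  map_zero := extendedAuxC_zero ψ
  mul_self k := by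
    rcases eq_or_ne k 0 with rfl | hk
    · simp [extendedAuxC_zero]
    · lift k to {x : K // x ≠ 0} using hk
      rw [extendedAuxC_coe, auxC_mul_self]
  mul_of_ne {k l} hk hl hkl := by
    lift k to {x : K // x ≠ 0} using hk
    lift l to {x : K // x ≠ 0} using hl
    rw [extendedAuxC_coe, extendedAuxC_coe, auxC_mul_of_ne (hψ.ne (ne_of_apply_ne _ hkl))]

/-- The matrix `N_s` as a block matrix, for scalars `s` acting on an additive group `K` in place of
the field `K`, and for a map `ψ` that need not be bijective. -/
def moduleNN [AddGroup K] [SMul S K] (ψ : {x : K // x ≠ 0} → F) (s : S) :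
    Matrix (K × (F × F)) (K × (F × F)) ℝ :=
  comp K K (F × F) (F × F) ℝ (dilatedCirculant (extendedAuxC ψ) s)

theorem comp_diagonal_const {m n α : Type*} [DecidableEq m] [MulZeroOneClass α] (B : Matrix n n α) :
    comp m m n n α (diagonal fun _ => B) = (1 : Matrix m m α) ⊗ₖ B := by
  ext ⟨a, x⟩ ⟨b, y⟩
  rcases eq_or_ne a b with rfl | hab <;> simp [*]

theorem comp_const_allOnes (m n : Type*) :
    comp m m n n ℝ (Matrix.of fun _ _ => allOnes n) = allOnes (m × n) :=
  rfl

theorem NN_mul_general [AddCommGroup K] [Fintype K] [DecidableEq K] [Semiring S] [Module S K]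
    {ψ : {x : K // x ≠ 0} → F} (hψ : Function.Injective ψ)
    {β β' σ : Sˣ} (hσ : (σ : S) = β + β') :
    moduleNN ψ (β : S) * moduleNN ψ (β' : S) =
      (Fintype.card F : ℝ) • moduleNN ψ ((β * σ⁻¹ * β' : Sˣ) : S) +
        (2 : ℝ) • ((1 : Matrix K K ℝ) ⊗ₖ allOnes (F × F)) +
        ((Fintype.card K : ℝ) - 3) • allOnes (K × (F × F)) := by
  simpa only [moduleNN, map_mul, map_add, map_smul, compAlgEquiv_apply, comp_diagonal_const,
    comp_const_allOnes] using congrArg (compAlgEquiv K (F × F) ℝ ℝ)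
      ((isAuxiliaryFamily_extendedAuxC hψ).dilatedCirculant_mul hσ)

theorem NN_eq_moduleNN [Field K] [Fintype K] [DecidableEq K] (ψ : {x : K // x ≠ 0} ≃ F) (β : K) :
    NN ψ β = moduleNN ψ β := by
  ext ⟨a, x⟩ ⟨b, y⟩
  simp only [NN, moduleNN, dilatedCirculant, permP, Matrix.sum_apply, kroneckerMap_apply,
    comp_apply, Matrix.of_apply, smul_eq_mul, ite_mul, one_mul, zero_mul]
  generalize β * (-a + b) = k
  rcases eq_or_ne k 0 with rfl | hk
  · simp [extendedAuxC_zero, fun γ : {x : K // x ≠ 0} => γ.2.symm]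
  · lift k to {x : K // x ≠ 0} using hk
    simp [extendedAuxC_coe, Subtype.coe_inj]

end ConsecutivePrimePowers

/-- In the consecutive prime power construction, for nonzero `β, β'` with `β + β' ≠ 0`,
`N_β · N_{β'} = q·N_{ββ'/(β+β')} + 2·(I_{q+1} ⊗ J_{q²}) + (q−2)·J`. -/
theorem NN_mul {F K : Type*} [Field F] [Fintype F] [DecidableEq F]
    [Field K] [Fintype K] [DecidableEq K]
    (hcard : Fintype.card K = Fintype.card F + 1)
    (ψ : {x : K // x ≠ 0} ≃ F) (β β' : K) (hβ : β ≠ 0) (hβ' : β' ≠ 0)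
    (hs : β + β' ≠ 0) :
    NN ψ β * NN ψ β' =
      (Fintype.card F : ℝ) • NN ψ (β * β' / (β + β')) +
        (2 : ℝ) • ((1 : Matrix K K ℝ) ⊗ₖ allOnes (F × F)) +
        ((Fintype.card F : ℝ) - 2) • allOnes (K × (F × F)) := by
  have hq : (Fintype.card F : ℝ) - 2 = Fintype.card K - 3 := by
    rw [hcard]
    push_cast
    ring
  have hσ : (Units.mk0 (β + β') hs : K) = Units.mk0 β hβ + Units.mk0 β' hβ' := rfl
  simpa [NN_eq_moduleNN, hq, div_eq_mul_inv, mul_right_comm] using NN_mul_general ψ.injective hσ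
end
end
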